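/- arXiv:2510.16912 — 10 statements merged into one kernel-verified Lean document; each statement's English description precedes it below -/
import Mathlib

section
/- Let K be an algebraically closed field, d ≥ 2 an integer with char(K) not dividing d, and m > n ≥ 1 integers. Let a ∈ K, let A ∈ K be nonzero, and let v ∈ K[x] be a polynomial such that h(x) = A·(x−a)^m + v(x)^d has degree n. Then d divides m; setting ℓ = m/d, the polynomial v has degree ℓ and its leading coefficient B satisfies B^d = −A; moreover n − m + ℓ ≥ 0 and the polynomial q(x) := v(x) − B·(x−a)^ℓ is nonzero of degree exactly n − m + ℓ. -/
open Polynomial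

/-- Let `K` be an algebraically closed field, `d ≥ 2` an integer with
`char K ∤ d`, and `m > n ≥ 1` integers. Let `a ∈ K`, `A ∈ K` nonzero, and `v ∈ K[x]` such that
`h = A (x-a)^m + v^d` has degree `n`. Then `d ∣ m`; setting `ℓ = m / d`, `v` has degree `ℓ`
and its leading coefficient `B` satisfies `B ^ d = -A`; moreover `n - m + ℓ ≥ 0` and
`q := v - B (x-a)^ℓ` is nonzero of degree exactly `n - m + ℓ`. -/
theorem stmt0 {K : Type*} [Field K] [IsAlgClosed K] (d : ℕ) (hd : 2 ≤ d)
    (hchar : ¬ (ringChar K ∣ d)) (n m : ℕ) (hn : 1 ≤ n) (hnm : n < m)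
    (a A : K) (hA : A ≠ 0) (v : Polynomial K)
    (hdeg : (Polynomial.C A * (Polynomial.X - Polynomial.C a) ^ m + v ^ d).natDegree = n) :
    d ∣ m ∧ v.natDegree = m / d ∧ v.leadingCoeff ^ d = -A ∧
      0 ≤ (n : ℤ) - (m : ℤ) + ((m / d : ℕ) : ℤ) ∧
      v - Polynomial.C v.leadingCoeff * (Polynomial.X - Polynomial.C a) ^ (m / d) ≠ 0 ∧
      ((v - Polynomial.C v.leadingCoeff *
          (Polynomial.X - Polynomial.C a) ^ (m / d)).natDegree : ℤ)
        = (n : ℤ) - (m : ℤ) + ((m / d : ℕ) : ℤ) := by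
  have hP : (C A * (X - C a) ^ m).natDegree = m := by
    rw [natDegree_C_mul hA, natDegree_pow, natDegree_X_sub_C, mul_one]
  have hPl : (C A * (X - C a) ^ m).leadingCoeff = A := by
    rw [leadingCoeff_mul, leadingCoeff_pow, leadingCoeff_X_sub_C, leadingCoeff_C]; simp
  obtain ⟨h, hh⟩ : ∃ h, h = C A * (X - C a) ^ m + v ^ d := ⟨_, rfl⟩
  rw [← hh] at hdeg
  have hv : v ^ d = h - C A * (X - C a) ^ m := by rw [hh]; ring
  have hlt : h.natDegree < (C A * (X - C a) ^ m).natDegree := by rw [hP, hdeg]; exact hnm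
  have hvd : (v ^ d).natDegree = m := by
    rw [hv, natDegree_sub_eq_right_of_natDegree_lt hlt, hP]
  have hB : v.leadingCoeff ^ d = -A := by
    rw [← leadingCoeff_pow, leadingCoeff, hvd, hv, coeff_sub,
      coeff_eq_zero_of_natDegree_lt (by omega), zero_sub]
    conv_rhs => rw [← hPl, leadingCoeff, hP]
  rw [natDegree_pow] at hvd
  have hd0 : 0 < d := by omega
  have hdvd : d ∣ m := ⟨_, hvd.symm⟩
  have hl : v.natDegree = m / d := by
    rw [← hvd, Nat.mul_div_cancel_left _ hd0]
  have hB0 : v.leadingCoeff ≠ 0 := by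
    intro h0
    rw [h0, zero_pow hd0.ne'] at hB
    exact hA (neg_eq_zero.mp hB.symm)
  rw [← hl]
  generalize hBe : v.leadingCoeff = B at *
  generalize hle : v.natDegree = l at *
  obtain ⟨w, hw⟩ : ∃ w, w = C B * (X - C a) ^ l := ⟨_, rfl⟩
  rw [← hw]
  have hwdeg : w.natDegree = l := by
    rw [hw, natDegree_C_mul hB0, natDegree_pow, natDegree_X_sub_C, mul_one]
  have hwl : w.leadingCoeff = B := by
    rw [hw, leadingCoeff_mul, leadingCoeff_pow, leadingCoeff_X_sub_C, leadingCoeff_C]; simp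
  have hwd : w ^ d = - (C A * (X - C a) ^ m) := by
    rw [hw, mul_pow, ← C_pow, hB, ← pow_mul, mul_comm l d, hvd]; simp
  obtain ⟨S, hS⟩ : ∃ S, S = ∑ i ∈ Finset.range d, v ^ i * w ^ (d - 1 - i) := ⟨_, rfl⟩
  have hfac : h = S * (v - w) := by
    rw [hS, (Commute.all v w).geom_sum₂_mul, hwd, hh]; ring
  have hterm : ∀ i ∈ Finset.range d, (v ^ i * w ^ (d - 1 - i)).natDegree = (d - 1) * l ∧
      (v ^ i * w ^ (d - 1 - i)).leadingCoeff = B ^ (d - 1) := by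
    intro i hi
    have hi' : i + (d - 1 - i) = d - 1 := by
      have := Finset.mem_range.mp hi
      omega
    have hv0 : v ≠ 0 := by rintro rfl; exact hB0 (by rw [← hBe]; simp)
    have hw0 : w ≠ 0 := by rintro rfl; exact hB0 (by rw [← hwl]; simp)
    constructor
    · rw [natDegree_mul (pow_ne_zero _ hv0) (pow_ne_zero _ hw0), natDegree_pow, natDegree_pow,
        hle, hwdeg, ← add_mul, hi']
    · rw [leadingCoeff_mul, leadingCoeff_pow, leadingCoeff_pow, hBe, hwl, ← pow_add, hi']
  have hSc : S.coeff ((d - 1) * l) = d * B ^ (d - 1) := by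
    rw [hS, finset_sum_coeff, Finset.sum_congr rfl (g := fun _ => B ^ (d - 1))]
    · simp
    · intro i hi
      rw [← (hterm i hi).2, leadingCoeff, (hterm i hi).1]
  have hdK : (d : K) ≠ 0 := fun h0 => hchar ((ringChar.spec K d).mp h0)
  have hSdeg : S.natDegree = (d - 1) * l := by
    apply le_antisymm
    · rw [hS]
      exact natDegree_sum_le_of_forall_le _ _ (fun i hi => (hterm i hi).1.le)
    · apply le_natDegree_of_ne_zero
      rw [hSc]
      exact mul_ne_zero hdK (pow_ne_zero _ hB0)
  have hh0 : h ≠ 0 := by rintro rfl; simp at hdeg; omega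
  have hS0 : S ≠ 0 := by rintro rfl; exact hh0 (by rw [hfac, zero_mul])
  have hq0 : v - w ≠ 0 := by intro h0; exact hh0 (by rw [hfac, h0, mul_zero])
  have hfin : n = (d - 1) * l + (v - w).natDegree := by
    rw [← hdeg, ← hSdeg, ← natDegree_mul hS0 hq0, ← hfac]
  have hm : m = (d - 1) * l + l := by
    rw [← hvd]
    obtain ⟨e, rfl⟩ : ∃ e, d = e + 1 := ⟨d - 1, by omega⟩
    simp; ring
  refine ⟨hdvd, rfl, hB, ?_, hq0, ?_⟩ <;> omega
end

section
/- Let K be an algebraically closed field, d ≥ 2 an integer with char(K) not dividing d, and n, m integers with d < n < m, d dividing m, and n − m + m/d ≥ 0. Set ℓ = m/d. Assume char(K) satisfies one of: (i) char(K) = 0; (ii) n − m + ℓ = 0 and char(K) does not divide ℓ; (iii) n − m + ℓ > 0 and char(K) does not divide n − m + ℓ. Let A and D be nonzero elements of K and choose B ∈ K with B^d = −A. Then the set of C ∈ K for which the polynomial f_C(x) = A·x^m + (B·x^ℓ + D·x^{n−m+ℓ} + C)^d has a repeated root in K is finite. -/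
open Polynomial

theorem aux_root {K : Type*} [Field K] (d l s : ℕ) (hd : 2 ≤ d) (hl : 2 ≤ l)
    (hdK : (d : K) ≠ 0) (A D B c a : K) (hA : A ≠ 0) (hB : B ^ d = -A)
    (h : (Polynomial.X - Polynomial.C a) ^ 2 ∣
      (Polynomial.C A * Polynomial.X ^ (d * l)
        + (Polynomial.C B * Polynomial.X ^ l
            + Polynomial.C D * Polynomial.X ^ s
            + Polynomial.C c) ^ d)) :
    (B * a ^ l + D * a ^ s + c = 0 ∧ a = 0) ∨
    ∃ z : K, z ^ d = 1 ∧ B * a ^ l + D * a ^ s + c = z * (B * a ^ l) ∧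
      (1 - z) * (B * l * a ^ l) + s * D * a ^ s = 0 := by
  obtain ⟨g, hg⟩ := h
  have h1 := congrArg (Polynomial.eval a) hg
  have h2 := congrArg (fun p => Polynomial.eval a (Polynomial.derivative p)) hg
  simp [Polynomial.derivative_pow] at h1 h2
  set P := B * a ^ l + D * a ^ s + c with hP
  by_cases ha : a = 0
  · left
    refine ⟨?_, ha⟩
    have : a ^ (d * l) = 0 := by rw [ha]; exact zero_pow (by positivity)
    rw [this, mul_zero, zero_add] at h1
    exact pow_eq_zero_iff (by omega) |>.1 h1
  · right
    have hB0 : B ≠ 0 := by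
      rintro rfl
      rw [zero_pow (by omega)] at hB
      exact hA (by simpa using hB.symm)
    have hu : B * a ^ l ≠ 0 := mul_ne_zero hB0 (pow_ne_zero _ ha)
    have hA' : A = - B ^ d := by rw [hB]; ring
    have hPd : P ^ d = (B * a ^ l) ^ d := by
      rw [mul_pow, ← pow_mul, mul_comm l d]
      rw [hA'] at h1
      linear_combination h1
    have hP0 : P ≠ 0 := by
      intro h0
      rw [h0, zero_pow (by omega)] at hPd
      exact pow_ne_zero d hu hPd.symm
    refine ⟨P / (B * a ^ l), ?_, ?_, ?_⟩
    · rw [div_pow, hPd, div_self (pow_ne_zero _ hu)]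
    · field_simp
    · have e1 : a ^ (d * l - 1) * a = a ^ (d * l) := by
        rw [← pow_succ]; congr 1
        have : 0 < d * l := by positivity
        omega
      have e2 : a ^ (l - 1) * a = a ^ l := by
        rw [← pow_succ]; congr 1; omega
      have e3 : (s : K) * a ^ (s - 1) * a = s * a ^ s := by
        rcases Nat.eq_zero_or_pos s with h | h
        · simp [h]
        · rw [mul_assoc, ← pow_succ]; congr 2; omega
      have e4 : P ^ (d - 1) * P = P ^ d := by
        rw [← pow_succ]; congr 1; omega
      have e5 : A * a ^ (d * l) = - P ^ d := by linear_combination h1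
      have h3 : (d : K) * P ^ d * (P * l - (B * l * a ^ l + s * D * a ^ s)) = 0 := by
        clear_value P
        linear_combination -(P * a) * h2 + A * d * l * P * e1
          + d * (B * l * (a ^ (l - 1) * a) + D * (s * a ^ (s - 1) * a)) * e4
          + d * P ^ d * B * l * e2 + d * P ^ d * D * e3 + d * l * P * e5
      have h4 := (mul_eq_zero.1 h3).resolve_left (mul_ne_zero hdK (pow_ne_zero _ hP0))
      field_simp
      linear_combination -h4

/-- With `d ≥ 2`, `char K ∤ d`, `d < n < m`, `d ∣ m`, `n - m + m/d ≥ 0`,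
`ℓ = m/d`, `s = n - m + ℓ`, assuming `char K = 0`, or `s = 0` and `char K ∤ ℓ`, or `s > 0` and
`char K ∤ s`: for nonzero `A, D ∈ K` and `B` with `B^d = -A`, the set of `C ∈ K` for which
`f_C = A x^m + (B x^ℓ + D x^s + C)^d` has a repeated root in `K` is finite. -/
theorem stmt3 {K : Type*} [Field K] [IsAlgClosed K] (d : ℕ) (hd : 2 ≤ d)
    (hchar : ¬ (ringChar K ∣ d)) (n m : ℕ) (hdn : d < n) (hnm : n < m) (hdvd : d ∣ m)
    (hge : 0 ≤ (n : ℤ) - (m : ℤ) + ((m / d : ℕ) : ℤ))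
    (hcase : ringChar K = 0
      ∨ (n + m / d - m = 0 ∧ ¬ (ringChar K ∣ m / d))
      ∨ (0 < n + m / d - m ∧ ¬ (ringChar K ∣ (n + m / d - m))))
    (A D : K) (hA : A ≠ 0) (hD : D ≠ 0) (B : K) (hB : B ^ d = -A) :
    {C : K | ∃ α : K, (Polynomial.X - Polynomial.C α) ^ 2 ∣
      (Polynomial.C A * Polynomial.X ^ m
        + (Polynomial.C B * Polynomial.X ^ (m / d)
            + Polynomial.C D * Polynomial.X ^ (n + m / d - m)
            + Polynomial.C C) ^ d)}.Finite := by
  have hdK : (d : K) ≠ 0 := fun h => hchar ((ringChar.spec K d).1 h)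
  obtain ⟨l, rfl⟩ := hdvd
  have hml : d * l / d = l := Nat.mul_div_cancel_left l (by omega)
  rw [hml] at hcase hge ⊢
  have hl : 2 ≤ l := by
    by_contra hlt
    have : d * l ≤ d * 1 := Nat.mul_le_mul_left d (by omega)
    omega
  generalize hs : n + l - d * l = s at *
  have hsc : (s = 0 ∧ (l : K) ≠ 0) ∨ (0 < s ∧ (s : K) ≠ 0) := by
    rcases hcase with h | ⟨h, h'⟩ | ⟨h, h'⟩
    · rcases Nat.eq_zero_or_pos s with h0 | h0
      · refine Or.inl ⟨h0, fun hh => ?_⟩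
        have := (ringChar.spec K l).1 hh
        rw [h, zero_dvd_iff] at this
        omega
      · refine Or.inr ⟨h0, fun hh => ?_⟩
        have := (ringChar.spec K s).1 hh
        rw [h, zero_dvd_iff] at this
        omega
    · exact Or.inl ⟨h, fun hh => h' ((ringChar.spec K l).1 hh)⟩
    · exact Or.inr ⟨h, fun hh => h' ((ringChar.spec K s).1 hh)⟩
  have hB0 : B ≠ 0 := by
    rintro rfl
    rw [zero_pow (by omega)] at hB
    exact hA (by simpa using hB.symm)
  rcases hsc with ⟨rfl, hlK⟩ | ⟨hs0, hsK⟩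
  · refine (Set.finite_singleton (-D)).subset ?_
    rintro c ⟨a, ha⟩
    rw [Set.mem_singleton_iff]
    rcases aux_root d l 0 hd hl hdK A D B c a hA hB ha with ⟨h, rfl⟩ | ⟨z, hz, h1, h2⟩
    · rw [zero_pow (by omega)] at h
      linear_combination h
    · by_cases ha0 : a = 0
      · subst ha0
        rw [zero_pow (by omega)] at h1
        linear_combination h1
      · have h3 : (1 - z) * (B * l * a ^ l) = 0 := by simpa using h2
        have h4 : 1 - z = 0 := (mul_eq_zero.1 h3).resolve_right
          (mul_ne_zero (mul_ne_zero hB0 hlK) (pow_ne_zero _ ha0))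
        linear_combination h1 - h4 * (B * a ^ l)
  · have hsl : s < l := by omega
    let q : K → K[X] := fun z => C ((1 - z) * (B * l)) * X ^ l + C (s * D) * X ^ s
    have hq : ∀ z, q z ≠ 0 := by
      intro z h0
      have := congrArg (fun p => Polynomial.coeff p s) h0
      simp only [q, Polynomial.coeff_add, Polynomial.coeff_C_mul, Polynomial.coeff_X_pow,
        Polynomial.coeff_zero, if_neg hsl.ne, if_true, mul_zero, zero_add, mul_one] at this
      exact mul_ne_zero hsK hD this
    have hfin : (⋃ z ∈ {z : K | z ^ d = 1}, (fun a => z * (B * a ^ l) - (B * a ^ l + D * a ^ s)) ''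
        {a | (q z).IsRoot a}).Finite := by
      refine Set.Finite.biUnion ?_ fun z _ => (Polynomial.finite_setOf_isRoot (hq z)).image _
      refine (Polynomial.finite_setOf_isRoot (p := (X ^ d - C 1 : K[X]))
        (Polynomial.X_pow_sub_C_ne_zero (by omega) 1)).subset ?_
      intro z hz
      have hz' : z ^ d = 1 := hz
      simp [Polynomial.IsRoot, hz']
    refine (hfin.union (Set.finite_singleton 0)).subset ?_
    rintro c ⟨a, ha⟩
    rcases aux_root d l s hd hl hdK A D B c a hA hB ha with ⟨h, rfl⟩ | ⟨z, hz, h1, h2⟩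
    · right
      rw [Set.mem_singleton_iff]
      rw [zero_pow (by omega), zero_pow (by omega)] at h
      linear_combination h
    · left
      refine Set.mem_biUnion (show z ∈ {z : K | z ^ d = 1} from hz) ⟨a, ?_, ?_⟩
      · simp only [Set.mem_setOf_eq, Polynomial.IsRoot, q]
        simp
        linear_combination h2
      · show _ = c
        linear_combination -h1
end

section
/- Let K be an algebraically closed field, d ≥ 2 an integer, and n, m integers with d < n < m, gcd(n,d) = 1, d dividing m, and n − m + m/d ≥ 0. Assume that char(K) = 0 or char(K) > n. Then there exist a nonzero A ∈ K and a polynomial v ∈ K[x] of degree m/d such that f(x) = A·x^m + v(x)^d is a monic polynomial of degree n with no repeated roots. -/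
open Polynomial

lemma core_aux {K : Type*} [Field K] (d k s : ℕ) (hd : 2 ≤ d) (hsk : s < k)
    (hdK : (d : K) ≠ 0) (q : K[X]) (hq : q.natDegree ≤ s) (hqs : q.coeff s = (d : K)⁻¹)
    (hq0 : q.eval 0 ≠ 0)
    (hx : ∀ x : K, x ≠ 0 → (x ^ k + q.eval x) ^ d = x ^ (k * d) →
      x * (derivative q).eval x = k * q.eval x → False) :
    (X ^ k + q).natDegree = k ∧
      (C (-1 : K) * X ^ (d * k) + (X ^ k + q) ^ d).Monic ∧
      (C (-1 : K) * X ^ (d * k) + (X ^ k + q) ^ d).natDegree = s + (d - 1) * k ∧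
      ∀ α : K, ¬ ((X - C α) ^ 2 ∣ (C (-1 : K) * X ^ (d * k) + (X ^ k + q) ^ d)) := by
  have hqd : q.degree < k := lt_of_le_of_lt degree_le_natDegree (by exact_mod_cast lt_of_le_of_lt hq hsk)
  have hvm : (X ^ k + q).Monic := monic_X_pow_add hqd
  have hvd : (X ^ k + q).natDegree = k := by
    apply natDegree_eq_of_degree_eq_some
    rw [degree_add_eq_left_of_degree_lt (by rwa [degree_X_pow]), degree_X_pow]
  obtain ⟨S, hS⟩ : ∃ S : K[X], S = ∑ i ∈ Finset.range d, (X ^ k + q) ^ i * (X ^ k) ^ (d - 1 - i) := ⟨_, rfl⟩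
  have hfS : C (-1 : K) * X ^ (d * k) + (X ^ k + q) ^ d = q * S := by
    have h := (Commute.all (X ^ k + q) (X ^ k : K[X])).mul_geom_sum₂ d
    rw [← hS] at h
    have e : (X ^ k + q) - X ^ k = q := by ring
    rw [e] at h
    rw [h, ← pow_mul, mul_comm k d]
    simp
    ring
  have hterm : ∀ i ∈ Finset.range d, ((X ^ k + q) ^ i * (X ^ k) ^ (d - 1 - i)).Monic ∧
      ((X ^ k + q) ^ i * (X ^ k) ^ (d - 1 - i)).natDegree = (d - 1) * k := by
    intro i hi
    have hi' := Finset.mem_range.1 hi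
    have h1 := hvm.pow i
    have h2 : ((X ^ k : K[X]) ^ (d - 1 - i)).Monic := (monic_X_pow k).pow _
    refine ⟨h1.mul h2, ?_⟩
    rw [h1.natDegree_mul h2, hvm.natDegree_pow, (monic_X_pow k).natDegree_pow, hvd,
      natDegree_X_pow, ← add_mul]
    congr 1
    omega
  have hSd : S.natDegree ≤ (d - 1) * k := by
    rw [hS]
    exact natDegree_sum_le_of_forall_le _ _ fun i hi => (hterm i hi).2.le
  have hSc : S.coeff ((d - 1) * k) = d := by
    rw [hS, finsetSum_coeff, Finset.sum_congr rfl (g := fun _ => (1 : K))]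
    · simp
    · intro i hi
      have := (hterm i hi).1.coeff_natDegree
      rwa [(hterm i hi).2] at this
  have hc : (q * S).coeff (s + (d - 1) * k) = 1 := by
    rw [coeff_mul_add_eq_of_natDegree_le hq hSd, hqs, hSc, inv_mul_cancel₀ hdK]
  have hle : (q * S).natDegree ≤ s + (d - 1) * k := natDegree_mul_le_of_le hq hSd
  refine ⟨hvd, ?_, ?_, ?_⟩
  · rw [hfS]; exact monic_of_natDegree_le_of_coeff_eq_one _ hle hc
  · rw [hfS]
    exact le_antisymm hle (le_natDegree_of_ne_zero (by rw [hc]; exact one_ne_zero))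
  · rintro α ⟨g, hg⟩
    have h0 := congrArg (eval α) hg
    have h1 := congrArg (fun p => eval α (derivative p)) hg
    simp [derivative_pow] at h0 h1
    have hk : 0 < k := by omega
    have hα : α ≠ 0 := by
      rintro rfl
      have : d * k ≠ 0 := by positivity
      have hd0 : d ≠ 0 := by omega
      simp [zero_pow this, zero_pow hk.ne', hd0] at h0
      exact hq0 h0
    have h0' : (α ^ k + q.eval α) ^ d = α ^ (k * d) := by
      rw [mul_comm k d]; linear_combination h0
    refine hx α hα h0' ?_
    have e1 : (α ^ k + q.eval α) ^ d = (α ^ k + q.eval α) ^ (d - 1) * (α ^ k + q.eval α) := by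
      rw [← pow_succ]; congr 1; omega
    have e2 : α ^ (d * k) = α ^ (d * k - 1) * α := by
      rw [← pow_succ]; congr 1
      have : 0 < d * k := by positivity
      omega
    have e3 : α ^ k = α ^ (k - 1) * α := by
      rw [← pow_succ]; congr 1; omega
    rw [mul_comm k d] at h0'
    have hne : (d : K) * α ^ (d * k) ≠ 0 := mul_ne_zero hdK (pow_ne_zero _ hα)
    apply mul_left_cancel₀ hne
    generalize eval α (derivative q) = Q' at *
    generalize eval α q = Q at *
    generalize α ^ (d * k - 1) = P at *
    generalize (α ^ k + Q) ^ (d - 1) = V at *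
    generalize α ^ (k - 1) = R at *
    generalize α ^ (d * k) = M at *
    generalize (α ^ k + Q) ^ d = W at *
    generalize α ^ k = T at *
    have e4 : M = V * (T + Q) := h0'.symm.trans e1
    linear_combination α * (T + Q) * h1 - d * k * (T + Q) * e2 + d * (k * R * α + α * Q') * e4
      + d * M * k * e3

theorem stmt4 {K : Type*} [Field K] [IsAlgClosed K] (d : ℕ) (hd : 2 ≤ d)
    (n m : ℕ) (hdn : d < n) (hnm : n < m) (hcop : Nat.Coprime n d) (hdvd : d ∣ m)
    (hge : 0 ≤ (n : ℤ) - (m : ℤ) + ((m / d : ℕ) : ℤ))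
    (hchar : ringChar K = 0 ∨ n < ringChar K) :
    ∃ (A : K) (v : Polynomial K), A ≠ 0 ∧ v.natDegree = m / d ∧
      (Polynomial.C A * Polynomial.X ^ m + v ^ d).Monic ∧
      (Polynomial.C A * Polynomial.X ^ m + v ^ d).natDegree = n ∧
      ∀ α : K, ¬ ((Polynomial.X - Polynomial.C α) ^ 2 ∣
        (Polynomial.C A * Polynomial.X ^ m + v ^ d)) := by
  have hcast : ∀ j : ℕ, 0 < j → j ≤ n → (j : K) ≠ 0 := by
    intro j hj hjn h
    have h := (ringChar.spec K j).1 h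
    rcases hchar with h' | h'
    · rw [h', zero_dvd_iff] at h; omega
    · have := Nat.le_of_dvd hj h; omega
  obtain ⟨k, rfl⟩ := hdvd
  have hdk : d * k / d = k := Nat.mul_div_cancel_left k (by omega)
  rw [hdk] at hge ⊢
  have hsplit : d * k = (d - 1) * k + k := by
    obtain ⟨e, rfl⟩ : ∃ e, d = e + 1 := ⟨d - 1, by omega⟩
    simp; ring
  obtain ⟨s, hs⟩ : ∃ s, n = s + (d - 1) * k := ⟨n - (d - 1) * k, by omega⟩
  have hsk : s < k := by omega
  have hkn : k ≤ n := by
    have : 1 * k ≤ (d - 1) * k := Nat.mul_le_mul_right k (by omega)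
    omega
  have hdK := hcast d (by omega) hdn.le
  have hkK := hcast k (by omega) hkn
  suffices H : ∃ q : K[X], q.natDegree ≤ s ∧ q.coeff s = (d : K)⁻¹ ∧ q.eval 0 ≠ 0 ∧
      (∀ x : K, x ≠ 0 → (x ^ k + q.eval x) ^ d = x ^ (k * d) →
      x * (derivative q).eval x = k * q.eval x → False) by
    obtain ⟨q, h1, h2, h3, h4⟩ := H
    refine ⟨-1, X ^ k + q, by simp, ?_⟩
    rw [hs]
    exact core_aux d k s hd hsk hdK q h1 h2 h3 h4
  rcases Nat.eq_zero_or_pos s with h0 | hspos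
  · subst h0
    refine ⟨C (d : K)⁻¹, by simp, by simp, by simpa using hdK, ?_⟩
    intro x _ _ h
    simp at h
    tauto
  have hsK := hcast s hspos (by omega)
  obtain ⟨b, hb⟩ : ∃ b : K, b = (d : K)⁻¹ := ⟨_, rfl⟩
  have hb0 : b ≠ 0 := by rw [hb]; exact inv_ne_zero hdK
  obtain ⟨e, he⟩ : ∃ e : K, e = s * b / k := ⟨_, rfl⟩
  have he0 : e ≠ 0 := by rw [he]; exact div_ne_zero (mul_ne_zero hsK hb0) hkK
  obtain ⟨P, hP⟩ : ∃ P : K[X], P = (X ^ k + C e * X ^ s) ^ d - X ^ (k * d) := ⟨_, rfl⟩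
  have hP0 : P ≠ 0 := by
    intro h
    obtain ⟨z, hz⟩ := IsAlgClosed.exists_pow_nat_eq (-e) (n := k - s) (by omega)
    have hz0 : z ≠ 0 := by
      rintro rfl
      rw [zero_pow (by omega)] at hz
      exact he0 (by linear_combination hz)
    have h' := congrArg (eval z) (hP.symm.trans h)
    have hzk : z ^ k = z ^ (k - s) * z ^ s := by rw [← pow_add]; congr 1; omega
    simp only [eval_sub, eval_pow, eval_add, eval_mul, eval_X, eval_C, eval_zero] at h'
    have h2 : z ^ k + e * z ^ s = 0 := by rw [hzk, hz]; ring
    rw [h2, zero_pow (by omega), zero_sub, neg_eq_zero] at h'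
    exact pow_ne_zero _ hz0 h'
  classical
  have : Infinite K := IsAlgClosed.instInfinite
  obtain ⟨c, hc⟩ := Infinite.exists_notMem_finset
    (insert 0 (P.roots.toFinset.image (fun x => e * x ^ s - b * x ^ s)))
  simp only [Finset.mem_insert, Finset.mem_image, not_or, Multiset.mem_toFinset] at hc
  obtain ⟨hc0, hc⟩ := hc
  refine ⟨C b * X ^ s + C c, ?_, ?_, ?_, ?_⟩
  · compute_degree
  · simp [coeff_C, hspos.ne', hb]
  · simpa [hspos.ne'] using hc0
  · intro x hx0 h1 h2
    have hxs : x ^ s = x ^ (s - 1) * x := by rw [← pow_succ]; congr 1; omega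
    simp [derivative_pow] at h1 h2
    have hce : b * x ^ s + c = e * x ^ s := by
      apply mul_left_cancel₀ hkK
      rw [← h2, he, hxs]
      field_simp
    apply hc
    refine ⟨x, ?_, by linear_combination -hce⟩
    rw [mem_roots hP0, IsRoot, hP]
    simp [← hce, h1]
end

section
/- Let d ≥ 2 and E ≥ 2 be integers and m a positive integer with gcd(m,d) = 1 and m > d(E−1). Set r = m/d ∈ ℚ and F(x) = (1+x)^m − V_{r,E}(x)^d ∈ ℚ[x]. Then F has degree m, the multiplicity of 0 as a root of F is exactly E, and F has no repeated roots other than 0; equivalently, f(x) := F(x)/x^E is a squarefree polynomial of degree m − E with nonzero constant term. -/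
open Polynomial Finset

/-- The generalized binomial coefficient `C(r, k) = r (r-1) ⋯ (r-k+1) / k!` for `r : ℚ`. -/
def genBinom (r : ℚ) (k : ℕ) : ℚ :=
  (∏ i ∈ Finset.range k, (r - i)) / (Nat.factorial k)

/-- The truncated binomial polynomial `V_{r,E}(x) = Σ_{k=0}^{E-1} C(r,k) x^k ∈ ℚ[x]`. -/
noncomputable def truncBinom (r : ℚ) (E : ℕ) : Polynomial ℚ :=
  ∑ k ∈ Finset.range E, Polynomial.C (genBinom r k) * Polynomial.X ^ k


lemma genBinom_succ (r : ℚ) (k : ℕ) :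
    genBinom r (k+1) * (k+1) = (r - k) * genBinom r k := by
  unfold genBinom
  rw [Finset.prod_range_succ, Nat.factorial_succ]
  have h1 : (Nat.factorial k : ℚ) ≠ 0 := by exact_mod_cast Nat.factorial_ne_zero k
  have h2 : (k : ℚ) + 1 ≠ 0 := by positivity
  push_cast
  field_simp

lemma truncBinom_ode (r : ℚ) (n : ℕ) :
    (1 + X) * derivative (truncBinom r (n+1)) =
      C r * truncBinom r (n+1) - C ((r - n) * genBinom r n) * X ^ n := by
  induction n with
  | zero => simp [truncBinom]
  | succ n ih =>
    have e : truncBinom r (n+1+1) = truncBinom r (n+1) + C (genBinom r (n+1)) * X ^ (n+1) := by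
      unfold truncBinom
      rw [Finset.sum_range_succ]
    rw [e, derivative_add, mul_add, ih, ← genBinom_succ]
    simp only [derivative_C_mul_X_pow, C_mul, C_sub, C_add, Nat.cast_add, Nat.cast_one, C_1,
      Nat.add_sub_cancel]
    ring

lemma truncBinom_eval_zero (r : ℚ) (n : ℕ) : (truncBinom r (n+1)).eval 0 = 1 := by
  induction n with
  | zero => simp [truncBinom, genBinom]
  | succ n ih =>
    have e : truncBinom r (n+1+1) = truncBinom r (n+1) + C (genBinom r (n+1)) * X ^ (n+1) := by
      unfold truncBinom
      rw [Finset.sum_range_succ]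
    rw [e, eval_add, ih]
    simp

lemma truncBinom_natDegree (r : ℚ) (n : ℕ) : (truncBinom r (n+1)).natDegree ≤ n := by
  unfold truncBinom
  apply natDegree_sum_le_of_forall_le
  intro i hi
  have := Finset.mem_range.1 hi
  exact (natDegree_C_mul_X_pow_le _ _).trans (by omega)

lemma X_pow_cmp_aux (a k : ℕ) (A B : ℚ[X]) (hA : A.eval 0 ≠ 0)
    (h : X ^ a * A = X ^ (a + k + 1) * B) : False := by
  have : X ^ a * A = X ^ a * (X * (X ^ k * B)) := by rw [h]; ring
  have := mul_left_cancel₀ (pow_ne_zero a X_ne_zero) this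
  apply hA
  rw [this]
  simp

lemma X_pow_cmp (a b : ℕ) (A B : ℚ[X]) (hA : A.eval 0 ≠ 0) (hB : B.eval 0 ≠ 0)
    (h : X ^ a * A = X ^ b * B) : a = b := by
  rcases lt_trichotomy a b with hl | hl | hl
  · obtain ⟨k, rfl⟩ := Nat.exists_eq_add_of_lt hl
    exact (X_pow_cmp_aux a k A B hA h).elim
  · exact hl
  · obtain ⟨k, rfl⟩ := Nat.exists_eq_add_of_lt hl
    exact (X_pow_cmp_aux b k B A hB h.symm).elim

lemma genBinom_ne_zero (r : ℚ) (h : ∀ i : ℕ, r ≠ i) (k : ℕ) : genBinom r k ≠ 0 := by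
  unfold genBinom
  apply div_ne_zero
  · exact Finset.prod_ne_zero_iff.2 fun i _ => sub_ne_zero.2 (h i)
  · exact_mod_cast Nat.factorial_ne_zero k

/-- Let `d ≥ 2`, `E ≥ 2`, `m > 0` with `gcd(m,d) = 1` and `m > d(E-1)`.
Set `r = m/d` and `F = (1+x)^m - V_{r,E}(x)^d`. Then `F` has degree `m`, the multiplicity of
`0` as a root of `F` is exactly `E`, `F` has no repeated roots other than `0` (in an algebraic
closure of `ℚ`); equivalently, `f := F / x^E` is squarefree of degree `m - E` with nonzero
constant term. -/
theorem stmt7 (d E m : ℕ) (hd : 2 ≤ d) (hE : 2 ≤ E) (hm : 0 < m)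
    (hcop : Nat.Coprime m d) (hmd : d * (E - 1) < m) :
    ((1 + Polynomial.X) ^ m - (truncBinom ((m : ℚ) / d) E) ^ d).natDegree = m ∧
    ((1 + Polynomial.X) ^ m - (truncBinom ((m : ℚ) / d) E) ^ d).rootMultiplicity 0 = E ∧
    (∀ α : AlgebraicClosure ℚ, α ≠ 0 →
      (((1 + Polynomial.X) ^ m - (truncBinom ((m : ℚ) / d) E) ^ d).map
        (algebraMap ℚ (AlgebraicClosure ℚ))).rootMultiplicity α ≤ 1) ∧
    ∃ f : Polynomial ℚ,
      (1 + Polynomial.X) ^ m - (truncBinom ((m : ℚ) / d) E) ^ d = Polynomial.X ^ E * f ∧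
      Squarefree f ∧ f.natDegree = m - E ∧ f.coeff 0 ≠ 0 := by
  obtain ⟨n, rfl⟩ : ∃ n, E = n + 1 := ⟨E - 1, by omega⟩
  simp only [Nat.add_sub_cancel] at hmd
  have hd0 : (d : ℚ) ≠ 0 := by
    have : d ≠ 0 := by omega
    exact_mod_cast this
  have hm0 : (m : ℚ) ≠ 0 := by exact_mod_cast hm.ne'
  obtain ⟨r, hr⟩ : ∃ r : ℚ, r = (m : ℚ) / d := ⟨_, rfl⟩
  rw [← hr]
  have hdr : (d : ℚ) * r = m := by rw [hr]; field_simp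
  have hr0 : r ≠ 0 := by
    rintro rfl
    apply hm0
    rw [← hdr]; simp
  have hri : ∀ i : ℕ, r ≠ i := by
    rintro i rfl
    have h1 : d * i = m := by exact_mod_cast hdr
    have h2 : d ∣ Nat.gcd m d := Nat.dvd_gcd ⟨i, h1.symm⟩ dvd_rfl
    rw [hcop] at h2
    have := Nat.le_of_dvd one_pos h2
    omega
  obtain ⟨c, hc⟩ : ∃ c : ℚ, c = (r - n) * genBinom r n := ⟨_, rfl⟩
  have hc0 : c ≠ 0 := by
    rw [hc]
    exact mul_ne_zero (sub_ne_zero.2 (hri n)) (genBinom_ne_zero r hri n)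
  have ode := truncBinom_ode r n
  have hV0 := truncBinom_eval_zero r n
  have hVd := truncBinom_natDegree r n
  rw [← hc] at ode
  generalize truncBinom r (n+1) = V at *
  obtain ⟨F, hF⟩ : ∃ F : ℚ[X], F = (1 + X) ^ m - V ^ d := ⟨_, rfl⟩
  rw [← hF]
  have hdeg : F.natDegree = m := by
    have h1 : ((1 + X : ℚ[X]) ^ m).natDegree = m := by
      rw [natDegree_pow, add_comm, ← C_1, natDegree_X_add_C, mul_one]
    rw [hF, natDegree_sub_eq_left_of_natDegree_lt, h1]
    rw [h1, natDegree_pow]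
    exact (Nat.mul_le_mul_left d hVd).trans_lt hmd
  have hF0 : F ≠ 0 := by
    rintro rfl
    simp at hdeg
    omega
  have key : (1 + X) * derivative F = C (m : ℚ) * F + C ((d : ℚ) * c) * V ^ (d - 1) * X ^ n := by
    obtain ⟨e, rfl⟩ : ∃ e, d = e + 1 := ⟨d - 1, by omega⟩
    obtain ⟨k, rfl⟩ : ∃ k, m = k + 1 := ⟨m - 1, by omega⟩
    have hC : C (((e + 1 : ℕ) : ℚ)) * C r = C (((k + 1 : ℕ) : ℚ)) := by rw [← C_mul, hdr]
    rw [hF, derivative_sub, derivative_pow, derivative_pow, C_mul]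
    simp only [Nat.add_sub_cancel, derivative_add, derivative_one, derivative_X, zero_add]
    linear_combination (- C (((e + 1 : ℕ) : ℚ)) * V ^ e) * ode - V ^ (e+1) * hC
  have hFe : F.eval 0 = 0 := by simp [hF, hV0]
  obtain ⟨g, hg, hgd⟩ := exists_eq_pow_rootMultiplicity_mul_and_not_dvd F hF0 0
  have hpos : 0 < F.rootMultiplicity 0 := (rootMultiplicity_pos hF0).2 hFe
  have hg0 : g.eval 0 ≠ 0 := fun h => hgd (dvd_iff_isRoot.2 h)
  have hmult : F.rootMultiplicity 0 = n + 1 := by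
    obtain ⟨a, ha⟩ : ∃ a, F.rootMultiplicity 0 = a + 1 := ⟨_, (Nat.succ_pred_eq_of_pos hpos).symm⟩
    rw [ha, C_0, sub_zero] at hg
    have hh : X ^ a * ((1 + X) * (C ((a : ℚ) + 1) * g + X * derivative g) - C (m : ℚ) * (X * g))
        = X ^ n * (C ((d : ℚ) * c) * V ^ (d - 1)) := by
      rw [hg] at key
      rw [derivative_mul, derivative_X_pow] at key
      simp only [Nat.add_sub_cancel] at key
      push_cast at key
      simp only [C_add, C_1] at key ⊢
      linear_combination key
    have := X_pow_cmp a n _ _ ?_ ?_ hh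
    · omega
    · have : (a : ℚ) + 1 ≠ 0 := by positivity
      simp [hg0, this]
    · simp [hV0, hd0, hc0]
  have hrep : ∀ α : AlgebraicClosure ℚ, α ≠ 0 →
      (F.map (algebraMap ℚ (AlgebraicClosure ℚ))).rootMultiplicity α ≤ 1 := by
    intro α hα
    by_contra hcon
    push Not at hcon
    have hFm : F.map (algebraMap ℚ (AlgebraicClosure ℚ)) ≠ 0 :=
      (Polynomial.map_ne_zero_iff (algebraMap ℚ (AlgebraicClosure ℚ)).injective).2 hF0
    obtain ⟨h1, h2⟩ := (one_lt_rootMultiplicity_iff_isRoot hFm).1 hcon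
    rw [derivative_map] at h2
    have h1' : aeval α F = 0 := by rwa [IsRoot, eval_map_algebraMap] at h1
    have h2' : aeval α (derivative F) = 0 := by rwa [IsRoot, eval_map_algebraMap] at h2
    have k1 := congrArg (aeval α) key
    have k2 := congrArg (aeval α) ode
    have k3 := congrArg (aeval α) hF
    simp only [map_mul, map_add, map_sub, map_pow, aeval_X, aeval_C, map_one, h1', h2',
      mul_zero, zero_add] at k1 k2 k3
    have ed : algebraMap ℚ (AlgebraicClosure ℚ) d ≠ 0 := by simpa using hd0
    have ec : algebraMap ℚ (AlgebraicClosure ℚ) c ≠ 0 := by simpa using hc0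
    have hVα : aeval α V = 0 := by
      by_contra hne
      exact (mul_ne_zero (mul_ne_zero (mul_ne_zero ed ec) (pow_ne_zero _ hne))
        (pow_ne_zero n hα)) k1.symm
    rw [hVα, zero_pow (by omega), sub_zero] at k3
    have h3 : 1 + α = 0 := eq_zero_of_pow_eq_zero k3.symm
    rw [h3, hVα, zero_mul, mul_zero, zero_sub] at k2
    exact (neg_ne_zero.2 (mul_ne_zero ec (pow_ne_zero n hα))) k2.symm
  refine ⟨hdeg, hmult, hrep, g, ?_, ?_, ?_, ?_⟩
  · rw [hmult, C_0, sub_zero] at hg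
    exact hg
  · have hgne : g ≠ 0 := by
      rintro rfl
      simp at hg0
    intro p hp
    by_contra hu
    have hp0 : p ≠ 0 := by
      rintro rfl
      simp at hp
      exact hgne hp
    have hpd : p.degree ≠ 0 := fun h => hu (isUnit_iff_degree_eq_zero.2 h)
    obtain ⟨α, hα⟩ := IsAlgClosed.exists_aeval_eq_zero (AlgebraicClosure ℚ) p hpd
    have hα0 : α ≠ 0 := by
      rintro rfl
      apply hg0
      obtain ⟨q, rfl⟩ := hp
      have : p.eval 0 = 0 := by
        have h := aeval_algebraMap_apply (AlgebraicClosure ℚ) (0 : ℚ) p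
        rw [map_zero, hα] at h
        have := (map_eq_zero (algebraMap ℚ (AlgebraicClosure ℚ))).1 h.symm
        simpa using this
      simp [this]
    have hle := hrep α hα0
    have hFm : F.map (algebraMap ℚ (AlgebraicClosure ℚ)) ≠ 0 :=
      (Polynomial.map_ne_zero_iff (algebraMap ℚ (AlgebraicClosure ℚ)).injective).2 hF0
    have hdv : (X - C α) ∣ p.map (algebraMap ℚ (AlgebraicClosure ℚ)) := by
      rw [dvd_iff_isRoot, IsRoot, eval_map_algebraMap, hα]
    have hpp : p * p ∣ F := hp.trans (by rw [hg]; exact dvd_mul_left _ _)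
    have hpm := Polynomial.map_dvd (algebraMap ℚ (AlgebraicClosure ℚ)) hpp
    rw [Polynomial.map_mul] at hpm
    have h2 : (X - C α) ^ 2 ∣ F.map (algebraMap ℚ (AlgebraicClosure ℚ)) := by
      rw [pow_two]
      exact (mul_dvd_mul hdv hdv).trans hpm
    have := (le_rootMultiplicity_iff hFm).2 h2
    omega
  · have hgne : g ≠ 0 := by
      rintro rfl
      simp at hg0
    rw [hmult, C_0, sub_zero] at hg
    have := congrArg natDegree hg
    rw [hdeg, natDegree_mul (pow_ne_zero _ X_ne_zero) hgne, natDegree_X_pow] at this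
    omega
  · rwa [coeff_zero_eq_eval_zero]
end

section
/- Let d ≥ 2 and E ≥ 2 be integers and m a positive integer not divisible by d. Set r = m/d ∈ ℚ. Then x^E divides the polynomial (1+x)^m − V_{r,E}(x)^d in ℚ[x], but x^{E+1} does not divide it. -/
open Polynomial Finset

lemma genBinom_eq_choose (r : ℚ) (k : ℕ) : genBinom r k = Ring.choose r k := by
  have h : (descPochhammer ℤ k).smeval r = ∏ i ∈ Finset.range k, (r - i) := by
    rw [← descPochhammer_eval_eq_prod_range, ← Polynomial.eval₂_smulOneHom_eq_smeval,
      ← descPochhammer_map (Int.castRingHom ℚ), Polynomial.eval_map]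
    congr 1
    exact Subsingleton.elim _ _
  rw [Ring.choose_eq_smul, h, genBinom, smul_eq_mul, div_eq_inv_mul]

lemma coeff_truncBinom (r : ℚ) (E n : ℕ) :
    (truncBinom r E).coeff n = if n < E then genBinom r n else 0 := by
  simp [truncBinom, Polynomial.finset_sum_coeff, Polynomial.coeff_C_mul, Polynomial.coeff_X_pow]

lemma binomialSeries_nat_mul (r : ℚ) (d : ℕ) :
    PowerSeries.binomialSeries ℚ ((d : ℚ) * r) = (PowerSeries.binomialSeries ℚ r) ^ d := by
  induction d with
  | zero => simp
  | succ d ih =>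
    rw [Nat.cast_succ, add_mul, one_mul, PowerSeries.binomialSeries_add, ih, pow_succ]

lemma key (d E m : ℕ) (hd : 2 ≤ d) (hE : 2 ≤ E) :
    ∃ H : PowerSeries ℚ,
      (((1 + Polynomial.X) ^ m - (truncBinom ((m : ℚ) / d) E) ^ d : Polynomial ℚ) :
        PowerSeries ℚ) = PowerSeries.X ^ E * H ∧
      PowerSeries.coeff 0 H = genBinom ((m : ℚ) / d) E * d := by
  set r : ℚ := (m : ℚ) / d with hr
  set V := truncBinom r E with hV
  set B := PowerSeries.binomialSeries ℚ r with hB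
  have hd0 : (d : ℚ) ≠ 0 := by positivity
  have hBd : B ^ d = (1 + PowerSeries.X) ^ m := by
    rw [hB, ← binomialSeries_nat_mul, hr, mul_div_cancel₀ _ hd0,
      PowerSeries.binomialSeries_nat]
  have hco : ∀ n, PowerSeries.coeff n (B - (V : PowerSeries ℚ)) =
      if n < E then 0 else genBinom r n := by
    intro n
    rw [map_sub, Polynomial.coeff_coe, hV, coeff_truncBinom, hB,
      PowerSeries.binomialSeries_coeff, ← genBinom_eq_choose]
    split_ifs <;> simp
  obtain ⟨G, hG⟩ : (PowerSeries.X : PowerSeries ℚ) ^ E ∣ B - (V : PowerSeries ℚ) := by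
    rw [PowerSeries.X_pow_dvd_iff]
    intro n hn
    rw [hco, if_pos hn]
  have hG0 : PowerSeries.constantCoeff G = genBinom r E := by
    have := hco E
    rw [hG, if_neg (lt_irrefl _), PowerSeries.coeff_X_pow_mul'] at this
    simpa using this
  have hV0 : PowerSeries.constantCoeff (V : PowerSeries ℚ) = 1 := by
    rw [← PowerSeries.coeff_zero_eq_constantCoeff_apply, Polynomial.coeff_coe, hV,
      coeff_truncBinom, if_pos (by omega)]
    simp [genBinom]
  have hB0 : PowerSeries.constantCoeff B = 1 := by
    rw [hB, PowerSeries.binomialSeries_constantCoeff]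
  refine ⟨G * ∑ i ∈ Finset.range d, B ^ i * (V : PowerSeries ℚ) ^ (d - 1 - i), ?_, ?_⟩
  · rw [← mul_assoc, ← hG, mul_comm, Commute.geom_sum₂_mul (Commute.all _ _), hBd]
    simp
  · rw [PowerSeries.coeff_zero_eq_constantCoeff_apply, map_mul, hG0, map_sum]
    simp [hV0, hB0]

/-- Let `d ≥ 2`, `E ≥ 2`, and `m > 0` not divisible by `d`; set `r = m/d`.
Then `x^E` divides `(1+x)^m - V_{r,E}(x)^d` in `ℚ[x]`, but `x^{E+1}` does not. -/
theorem stmt8 (d E m : ℕ) (hd : 2 ≤ d) (hE : 2 ≤ E) (hm : 0 < m) (hdvd : ¬ d ∣ m) :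
    (Polynomial.X ^ E ∣ (1 + Polynomial.X) ^ m - (truncBinom ((m : ℚ) / d) E) ^ d) ∧
    ¬ (Polynomial.X ^ (E + 1) ∣ (1 + Polynomial.X) ^ m - (truncBinom ((m : ℚ) / d) E) ^ d) := by
  obtain ⟨H, hH, hH0⟩ := key d E m hd hE
  have hc : ∀ n, ((1 + Polynomial.X) ^ m - (truncBinom ((m : ℚ) / d) E) ^ d).coeff n =
      if E ≤ n then PowerSeries.coeff (n - E) H else 0 := by
    intro n
    rw [← Polynomial.coeff_coe, hH, PowerSeries.coeff_X_pow_mul']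
  constructor
  · rw [Polynomial.X_pow_dvd_iff]
    intro n hn
    rw [hc, if_neg (by omega)]
  · rw [Polynomial.X_pow_dvd_iff]
    intro h
    have h1 := h E (by omega)
    have hd0 : (d : ℚ) ≠ 0 := by positivity
    rw [hc, if_pos le_rfl, Nat.sub_self, hH0, genBinom] at h1
    have hf : (Nat.factorial E : ℚ) ≠ 0 := by positivity
    have h2 : ∏ i ∈ Finset.range E, ((m : ℚ) / d - i) = 0 := by
      rcases mul_eq_zero.mp h1 with h1 | h1
      · exact (div_eq_zero_iff.mp h1).resolve_right hf
      · exact absurd h1 hd0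
    obtain ⟨i, -, hi⟩ := Finset.prod_eq_zero_iff.mp h2
    apply hdvd
    refine ⟨i, ?_⟩
    have h3 : (m : ℚ) = d * i := by
      field_simp at hi
      linarith
    exact_mod_cast h3
end

section
/- Let d ≥ 2 be an integer and m a positive integer with gcd(m,d) = 1, and set r = m/d ∈ ℚ. Then for every integer E ≥ 1, the alternating sum Σ_{k=0}^{E−1} (−1)^k · C(r,k) is a nonzero rational number; equivalently, V_{r,E}(−1) ≠ 0. -/
open Polynomial Finset

theorem alt_sum_eq (r : ℚ) (n : ℕ) :
    (∑ k ∈ Finset.range (n + 1), (-1 : ℚ) ^ k * genBinom r k) =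
      (-1) ^ n * (∏ i ∈ Finset.range n, (r - ((i + 1 : ℕ) : ℚ))) / (Nat.factorial n) := by
  induction n with
  | zero => simp [genBinom]
  | succ n ih =>
    rw [Finset.sum_range_succ, ih, genBinom, Finset.prod_range_succ',
      Finset.prod_range_succ (fun i : ℕ => r - ((i + 1 : ℕ) : ℚ)), Nat.factorial_succ]
    have h1 : ((Nat.factorial n : ℕ) : ℚ) ≠ 0 := by exact_mod_cast Nat.factorial_ne_zero n
    have h2 : (n : ℚ) + 1 ≠ 0 := by positivity
    generalize (∏ i ∈ Finset.range n, (r - ((i + 1 : ℕ) : ℚ))) = P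
    push_cast
    field_simp
    ring

/-- Let `d ≥ 2` and `m > 0` with `gcd(m,d) = 1`, and set `r = m/d`. Then for
every integer `E ≥ 1` the alternating sum `Σ_{k=0}^{E-1} (-1)^k C(r,k)` is nonzero;
equivalently `V_{r,E}(-1) ≠ 0`. -/
theorem stmt9 (d m : ℕ) (hd : 2 ≤ d) (hm : 0 < m) (hcop : Nat.Coprime m d) :
    ∀ E : ℕ, 1 ≤ E →
      (∑ k ∈ Finset.range E, (-1 : ℚ) ^ k * genBinom ((m : ℚ) / d) k) ≠ 0 ∧
      (truncBinom ((m : ℚ) / d) E).eval (-1) ≠ 0 := by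
  intro E hE
  have key : (∑ k ∈ Finset.range E, (-1 : ℚ) ^ k * genBinom ((m : ℚ) / d) k) ≠ 0 := by
    obtain ⟨n, rfl⟩ : ∃ n, E = n + 1 := ⟨E - 1, by omega⟩
    rw [alt_sum_eq]
    refine div_ne_zero (mul_ne_zero (pow_ne_zero _ (by norm_num)) ?_)
      (by exact_mod_cast Nat.factorial_ne_zero n)
    rw [Finset.prod_ne_zero_iff]
    intro i _ h
    have hd0 : (d : ℚ) ≠ 0 := by
      have : d ≠ 0 := by omega
      exact_mod_cast this
    rw [sub_eq_zero, div_eq_iff hd0] at h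
    have h' : m = (i + 1) * d := by exact_mod_cast h
    have hdvd : d ∣ m := ⟨i + 1, by rw [h', mul_comm]⟩
    have := Nat.Coprime.eq_one_of_dvd hcop.symm hdvd
    omega
  refine ⟨key, ?_⟩
  have : (truncBinom ((m : ℚ) / d) E).eval (-1) =
      ∑ k ∈ Finset.range E, (-1 : ℚ) ^ k * genBinom ((m : ℚ) / d) k := by
    rw [truncBinom, Polynomial.eval_finsetSum]
    refine Finset.sum_congr rfl fun k _ => ?_
    rw [Polynomial.eval_mul, Polynomial.eval_C, Polynomial.eval_pow, Polynomial.eval_X, mul_comm]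
  rw [this]
  exact key
end

section
/- Let p be a prime, d ≥ 2 an integer divisible by p, and m a positive integer not divisible by p. Set r = m/d ∈ ℚ. Then for every integer k ≥ 1, the p-adic valuation of the generalized binomial coefficient C(r,k) equals −k·v_p(d) − v_p(k!), where v_p denotes p-adic valuation. In particular, v_p(C(r,k)) is negative and strictly decreasing as a function of k ≥ 1. -/
open Polynomial Finset

theorem aux_factor (p d m : ℕ) [hp : Fact p.Prime] (hd : 2 ≤ d) (hpd : p ∣ d)
    (hpm : ¬ p ∣ m) (i : ℕ) :
    ((m : ℚ) / d - i) ≠ 0 ∧ padicValRat p ((m : ℚ) / d - i) = -(padicValNat p d : ℤ) := by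
  have hd0 : (d : ℚ) ≠ 0 := by
    have : d ≠ 0 := by omega
    exact_mod_cast this
  have hz : ¬ (p : ℤ) ∣ ((m : ℤ) - d * i) := by
    intro h
    have h2 : (p : ℤ) ∣ (d : ℤ) * i := Dvd.dvd.mul_right (by exact_mod_cast hpd) _
    have h3 := dvd_add h h2
    rw [sub_add_cancel] at h3
    exact hpm (by exact_mod_cast h3)
  have hz0 : ((m : ℤ) - d * i) ≠ 0 := by
    intro h
    rw [h] at hz
    exact hz (dvd_zero _)
  have e : (m : ℚ) / d - i = (((m : ℤ) - d * i : ℤ) : ℚ) / (d : ℚ) := by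
    push_cast
    field_simp
  have hq : (((m : ℤ) - d * i : ℤ) : ℚ) ≠ 0 := by exact_mod_cast hz0
  rw [e]
  refine ⟨div_ne_zero hq hd0, ?_⟩
  rw [padicValRat.div hq hd0, padicValRat.of_int, padicValInt.eq_zero_of_not_dvd hz,
    padicValRat.of_nat]
  simp

theorem aux_prod (p d m : ℕ) [hp : Fact p.Prime] (hd : 2 ≤ d) (hpd : p ∣ d)
    (hpm : ¬ p ∣ m) (k : ℕ) :
    (∏ i ∈ Finset.range k, ((m : ℚ) / d - i)) ≠ 0 ∧
    padicValRat p (∏ i ∈ Finset.range k, ((m : ℚ) / d - i))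
      = -(k : ℤ) * (padicValNat p d : ℤ) := by
  induction k with
  | zero => simp
  | succ k ih =>
    obtain ⟨h1, h2⟩ := aux_factor p d m hd hpd hpm k
    rw [Finset.prod_range_succ]
    refine ⟨mul_ne_zero ih.1 h1, ?_⟩
    rw [padicValRat.mul ih.1 h1, ih.2, h2]
    push_cast
    ring

theorem aux_binom (p d m : ℕ) [hp : Fact p.Prime] (hd : 2 ≤ d) (hpd : p ∣ d)
    (hpm : ¬ p ∣ m) (k : ℕ) :
    padicValRat p (genBinom ((m : ℚ) / d) k)
      = -(k : ℤ) * (padicValNat p d : ℤ) - (padicValNat p (Nat.factorial k) : ℤ) := by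
  obtain ⟨h1, h2⟩ := aux_prod p d m hd hpd hpm k
  have hf : (Nat.factorial k : ℚ) ≠ 0 := by exact_mod_cast Nat.factorial_ne_zero k
  rw [genBinom, padicValRat.div h1 hf, h2, padicValRat.of_nat]

/-- Let `p` be prime, `d ≥ 2` divisible by `p`, `m > 0` not divisible by
`p`, and `r = m/d`. For every `k ≥ 1`, `v_p(C(r,k)) = -k·v_p(d) - v_p(k!)`; in particular
`v_p(C(r,k))` is negative and strictly decreasing in `k ≥ 1`. -/
theorem stmt10 (p d m : ℕ) (hp : p.Prime) (hd : 2 ≤ d) (hpd : p ∣ d)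
    (hm : 0 < m) (hpm : ¬ p ∣ m) :
    ∀ k : ℕ, 1 ≤ k →
      padicValRat p (genBinom ((m : ℚ) / d) k)
        = -(k : ℤ) * (padicValNat p d : ℤ) - (padicValNat p (Nat.factorial k) : ℤ) ∧
      padicValRat p (genBinom ((m : ℚ) / d) k) < 0 ∧
      padicValRat p (genBinom ((m : ℚ) / d) (k + 1))
        < padicValRat p (genBinom ((m : ℚ) / d) k) := by
  have : Fact p.Prime := ⟨hp⟩
  intro k hk
  have hv : 1 ≤ padicValNat p d := one_le_padicValNat_of_dvd (by omega) hpd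
  rw [aux_binom p d m hd hpd hpm k, aux_binom p d m hd hpd hpm (k + 1), Nat.factorial_succ,
    padicValNat.mul (by omega) (Nat.factorial_ne_zero k)]
  refine ⟨rfl, ?_, ?_⟩
  · have : 0 < (k : ℤ) * (padicValNat p d : ℤ) := by
      have := Nat.mul_pos hk hv
      exact_mod_cast this
    rw [neg_mul]
    omega
  · rw [Nat.cast_add, Nat.cast_add, Nat.cast_one]
    rw [show -((k : ℤ) + 1) * (padicValNat p d : ℤ)
      = -(k : ℤ) * (padicValNat p d : ℤ) - padicValNat p d by ring]
    omega
end

section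
/- Let K be an algebraically closed field of characteristic 0, d ≥ 2 an integer, and m a positive integer not divisible by d. Let W ∈ K[z] be a polynomial such that z^d divides (1+z)^m − W(z)^d in K[z]. Then the coefficient of z^k in W is nonzero for every k with 0 ≤ k ≤ d−1; in particular, deg W ≥ d−1. -/
open Polynomial

/-- Let `K` be an algebraically closed field of characteristic `0`,
`d ≥ 2`, and `m > 0` not divisible by `d`. Let `W ∈ K[z]` with `z^d ∣ (1+z)^m - W(z)^d`.
Then the coefficient of `z^k` in `W` is nonzero for all `0 ≤ k ≤ d-1`; in particular
`deg W ≥ d - 1`. -/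
theorem stmt12 {K : Type*} [Field K] [IsAlgClosed K] [CharZero K]
    (d m : ℕ) (hd : 2 ≤ d) (hm : 0 < m) (hdvd : ¬ d ∣ m) (W : Polynomial K)
    (hW : Polynomial.X ^ d ∣ (1 + Polynomial.X) ^ m - W ^ d) :
    (∀ k : ℕ, k ≤ d - 1 → W.coeff k ≠ 0) ∧ d - 1 ≤ W.natDegree := by
  have key : ∀ k : ℕ, k ≤ d - 1 → W.coeff k ≠ 0 := by
    obtain ⟨Q, hQ⟩ := hW
    obtain ⟨e, rfl⟩ : ∃ e, d = e + 1 := ⟨d - 1, by omega⟩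
    obtain ⟨n, rfl⟩ : ∃ n, m = n + 1 := ⟨m - 1, by omega⟩
    have h0 : W.coeff 0 ≠ 0 := by
      intro h
      have := congrArg (Polynomial.eval 0) hQ
      rw [Polynomial.coeff_zero_eq_eval_zero] at h
      simp [h] at this
    have hD := congrArg Polynomial.derivative hQ
    simp only [derivative_sub, derivative_pow, derivative_mul, derivative_add, derivative_one,
      derivative_X, Nat.add_sub_cancel] at hD
    have h1 : X ^ e ∣ W ^ e * (C ((e + 1 : ℕ) : K) * (1 + X) * derivative W
        - C ((n + 1 : ℕ) : K) * W) := by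
      refine ⟨C ((n + 1 : ℕ) : K) * X * Q - (1 + X) * (C ((e + 1 : ℕ) : K) * Q
        + X * derivative Q), ?_⟩
      linear_combination (C ((n + 1 : ℕ) : K)) * hQ - (1 + X) * hD
    have hc : IsCoprime (X ^ e : K[X]) (W ^ e) := by
      apply IsCoprime.pow
      rw [(Polynomial.irreducible_X).coprime_iff_not_dvd, X_dvd_iff]
      exact h0
    have h2 := hc.dvd_of_dvd_mul_left h1
    rw [X_pow_dvd_iff] at h2
    intro k
    induction k with
    | zero => intro _; exact h0
    | succ k ih =>
      intro hk h
      have h3 := h2 k (by omega)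
      have h4 : (C ((e + 1 : ℕ) : K) * (1 + X) * derivative W).coeff k
          = ((e + 1 : ℕ) : K) * (W.coeff k * k) := by
        rw [mul_assoc, coeff_C_mul, add_mul, one_mul, coeff_add, coeff_derivative, h]
        cases k with
        | zero => simp
        | succ j => rw [coeff_X_mul, coeff_derivative]; push_cast; ring
      rw [coeff_sub, h4, coeff_C_mul] at h3
      have h5 : W.coeff k * ((((e + 1) * k : ℕ) : K) - ((n + 1 : ℕ) : K)) = 0 := by
        push_cast at h3 ⊢
        linear_combination h3
      rcases mul_eq_zero.1 h5 with h6 | h6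
      · exact ih (by omega) h6
      · exact hdvd ⟨k, (by exact_mod_cast (sub_eq_zero.1 h6).symm)⟩
  exact ⟨key, le_natDegree_of_ne_zero (key _ le_rfl)⟩
end

section
/- Let K be an algebraically closed field of characteristic 0, and let d, n be integers with 2 ≤ d < n and gcd(n,d) = 1. Let f ∈ K[x] be a monic polynomial of degree n, let a, a₁ ∈ K with a₁ ≠ a, and let v ∈ K[x] be a polynomial such that (x−a₁)^d·f(x) + v(x)^d = (x−a)^{n+d}. Then v(a₁) ≠ 0, d−1 ≤ deg v < (n+d)/d, and consequently n > d² − 2d. -/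
open Polynomial

/-- Let `K` be an algebraically closed field of characteristic `0`, and
`2 ≤ d < n` with `gcd(n,d) = 1`. Let `f ∈ K[x]` be monic of degree `n`, `a ≠ a₁` in `K`, and
`v ∈ K[x]` with `(x-a₁)^d f(x) + v(x)^d = (x-a)^{n+d}`. Then `v(a₁) ≠ 0`,
`d - 1 ≤ deg v < (n+d)/d`, and consequently `n > d² - 2d`. -/
theorem stmt13 {K : Type*} [Field K] [IsAlgClosed K] [CharZero K]
    (d n : ℕ) (hd : 2 ≤ d) (hdn : d < n) (hcop : Nat.Coprime n d)
    (f : Polynomial K) (hmonic : f.Monic) (hfdeg : f.natDegree = n)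
    (a a₁ : K) (hne : a₁ ≠ a) (v : Polynomial K)
    (heq : (Polynomial.X - Polynomial.C a₁) ^ d * f + v ^ d
      = (Polynomial.X - Polynomial.C a) ^ (n + d)) :
    v.eval a₁ ≠ 0 ∧ d - 1 ≤ v.natDegree ∧ (v.natDegree : ℚ) < ((n : ℚ) + d) / d ∧
      d ^ 2 - 2 * d < n := by
  have hdpos : 0 < d := by omega
  have hv : v.eval a₁ ≠ 0 := by
    have h := congrArg (Polynomial.eval a₁) heq
    simp [hdpos.ne'] at h
    intro h0
    rw [h0, zero_pow hdpos.ne'] at h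
    exact pow_ne_zero _ (sub_ne_zero.2 hne) h.symm
  have hv0 : v ≠ 0 := by
    rintro rfl
    simp at hv
  have hnd : ∀ m : ℕ, d * m ≠ n + d := by
    intro m hm
    have h1 : d ∣ n := (Nat.dvd_add_left (dvd_refl d)).1 ⟨m, hm.symm⟩
    have h2 : d = 1 := Nat.Coprime.eq_one_of_dvd hcop.symm h1
    omega
  have hup : d * v.natDegree < n + d := by
    have h1 : v ^ d = (X - C a) ^ (n + d) - (X - C a₁) ^ d * f := by
      rw [← heq]; ring
    have h2 : (v ^ d).natDegree ≤ n + d := by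
      rw [h1]
      refine (natDegree_sub_le _ _).trans (max_le ?_ ?_)
      · rw [natDegree_pow, natDegree_X_sub_C, mul_one]
      · refine natDegree_mul_le.trans ?_
        rw [natDegree_pow, natDegree_X_sub_C, mul_one, hfdeg, add_comm]
    rw [natDegree_pow] at h2
    exact lt_of_le_of_ne h2 (hnd _)
  have hlow : d - 1 ≤ v.natDegree := by
    obtain ⟨e, rfl⟩ : ∃ e, d = e + 1 := ⟨d - 1, by omega⟩
    set g : K[X] := C ((n : K) + (e + 1)) * v - C ((e : K) + 1) * ((X - C a) * derivative v) with hg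
    have hder := congrArg derivative heq
    simp only [derivative_add, derivative_mul, derivative_X_sub_C_pow, derivative_pow,
      Nat.add_sub_cancel, ← add_assoc] at hder
    have hdvd : (X - C a₁) ^ e ∣ ((X - C a) ^ (n + e) * v ^ e) * g := by
      have h1 : (X - C a₁) ^ e ∣ derivative ((X - C a) ^ (n + e + 1)) * v ^ (e + 1)
          - (X - C a) ^ (n + e + 1) * derivative (v ^ (e + 1)) := by
        rw [add_assoc, ← heq]
        simp only [derivative_add, derivative_mul, derivative_X_sub_C_pow, Nat.add_sub_cancel]
        refine ⟨(C ((e + 1 : ℕ) : K) * f + (X - C a₁) * derivative f) * v ^ (e + 1)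
          - (X - C a₁) * f * derivative (v ^ (e + 1)), ?_⟩
        ring
      convert h1 using 1
      rw [hg, derivative_X_sub_C_pow, derivative_pow]
      simp only [Nat.add_sub_cancel]
      push_cast
      simp only [map_add, map_one, map_natCast]
      ring
    have hirr : Irreducible (X - C a₁) := irreducible_X_sub_C a₁
    have hc1 : IsCoprime (X - C a₁) (X - C a) :=
      (hirr.coprime_iff_not_dvd).2 (by
        rw [dvd_iff_isRoot]; simpa [IsRoot] using sub_ne_zero.2 hne)
    have hc2 : IsCoprime (X - C a₁) v :=
      (hirr.coprime_iff_not_dvd).2 (by rw [dvd_iff_isRoot]; exact hv)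
    have hgd : (X - C a₁) ^ e ∣ g :=
      (IsCoprime.mul_right hc1.pow hc2.pow).dvd_of_dvd_mul_left hdvd
    have hcoef : g.coeff v.natDegree
        = ((n : K) + (e + 1) - (e + 1) * v.natDegree) * v.leadingCoeff := by
      rw [hg, sub_mul X, mul_comm X, coeff_sub, coeff_C_mul, coeff_C_mul, coeff_sub, coeff_C_mul]
      have h0 : (derivative v).coeff v.natDegree = 0 := by
        rw [coeff_derivative, coeff_eq_zero_of_natDegree_lt (Nat.lt_succ_self _), zero_mul]
      rw [h0]
      have h1 : (derivative v * X).coeff v.natDegree = v.natDegree * v.leadingCoeff := by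
        rcases hk : v.natDegree with _ | k
        · simp
        · rw [coeff_mul_X, coeff_derivative, leadingCoeff, hk]; push_cast; ring
      rw [h1, leadingCoeff]; ring
    have hg0 : g ≠ 0 := by
      intro h0
      rw [h0, coeff_zero] at hcoef
      rcases mul_eq_zero.1 hcoef.symm with h | h
      · apply hnd v.natDegree
        have := sub_eq_zero.1 h
        exact_mod_cast this.symm
      · exact hv0 (leadingCoeff_eq_zero.1 h)
    have hdeg : g.natDegree ≤ v.natDegree := by
      rw [hg]
      refine (natDegree_sub_le _ _).trans (max_le (natDegree_C_mul_le _ _) ?_)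
      refine (natDegree_C_mul_le _ _).trans ?_
      by_cases hz : v.natDegree = 0
      · rw [derivative_of_natDegree_zero hz]; simp
      · refine natDegree_mul_le.trans ?_
        rw [natDegree_X_sub_C]
        have := natDegree_derivative_lt hz
        omega
    have := natDegree_le_of_dvd hgd hg0
    rw [natDegree_pow, natDegree_X_sub_C, mul_one] at this
    simpa using this.trans hdeg
  refine ⟨hv, hlow, ?_, ?_⟩
  · rw [lt_div_iff₀ (by exact_mod_cast hdpos), mul_comm]
    exact_mod_cast hup
  · have h3 : d * (d - 1) ≤ d * v.natDegree := Nat.mul_le_mul_left d hlow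
    obtain ⟨e, rfl⟩ : ∃ e, d = e + 2 := ⟨d - 2, by omega⟩
    have h4 : e + 2 - 1 = e + 1 := rfl
    rw [h4] at h3
    have h5 : (e + 2) ^ 2 = (e + 2) * (e + 1) + (e + 2) := by ring
    omega
end

section
/- Let K be an algebraically closed field, d ≥ 2 an integer with char(K) not dividing d, and n, m integers with d < n < m, d dividing m, and n − m + m/d ≥ 0; set ℓ = m/d and s = n − m + ℓ, so 0 ≤ s < ℓ. Let B, D ∈ K be nonzero, let C ∈ K with C ≠ 0 and C ≠ −D, and for each d-th root of unity γ ≠ 1 in K define h_{γ,C}(x) = B(1−γ)·x^ℓ − γ·D·x^s − γ·C, and define q_C(x) = D·x^s + C. Then: (i) for any two distinct d-th roots of unity γ₁ ≠ γ₂, both different from 1, the polynomials h_{γ₁,C} and h_{γ₂,C} have no common root in K; and (ii) for every d-th root of unity γ ≠ 1, the polynomials q_C and h_{γ,C} have no common root in K. -/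
open Polynomial

/-- Let `K` be algebraically closed, `d ≥ 2` with `char K ∤ d`, and
`d < n < m` with `d ∣ m` and `n - m + m/d ≥ 0`; set `ℓ = m/d` and `s = n - m + ℓ`. Let
`B, D ∈ K` be nonzero and `c ∈ K` with `c ≠ 0`, `c ≠ -D`. For each `d`-th root of unity
`γ ≠ 1` put `h_γ(x) = B(1-γ) x^ℓ - γ D x^s - γ c`, and `q(x) = D x^s + c`. Then (i) for
distinct `d`-th roots of unity `γ₁ ≠ γ₂`, both `≠ 1`, the polynomials `h_{γ₁}` and `h_{γ₂}`
have no common root in `K`; and (ii) for every `d`-th root of unity `γ ≠ 1`, `q` and `h_γ`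
have no common root in `K`. -/
theorem stmt17 {K : Type*} [Field K] [IsAlgClosed K] (d : ℕ) (hd : 2 ≤ d)
    (hchar : ¬ (ringChar K ∣ d)) (n m : ℕ) (hdn : d < n) (hnm : n < m) (hdvd : d ∣ m)
    (hge : 0 ≤ (n : ℤ) - (m : ℤ) + ((m / d : ℕ) : ℤ))
    (B D c : K) (hB : B ≠ 0) (hD : D ≠ 0) (hc0 : c ≠ 0) (hcD : c ≠ -D) :
    (∀ γ₁ γ₂ : K, γ₁ ^ d = 1 → γ₂ ^ d = 1 → γ₁ ≠ 1 → γ₂ ≠ 1 → γ₁ ≠ γ₂ →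
      ∀ α : K, ¬ ((Polynomial.C (B * (1 - γ₁)) * Polynomial.X ^ (m / d)
            - Polynomial.C (γ₁ * D) * Polynomial.X ^ (n + m / d - m)
            - Polynomial.C (γ₁ * c)).eval α = 0 ∧
          (Polynomial.C (B * (1 - γ₂)) * Polynomial.X ^ (m / d)
            - Polynomial.C (γ₂ * D) * Polynomial.X ^ (n + m / d - m)
            - Polynomial.C (γ₂ * c)).eval α = 0)) ∧
    (∀ γ : K, γ ^ d = 1 → γ ≠ 1 →
      ∀ α : K, ¬ ((Polynomial.C D * Polynomial.X ^ (n + m / d - m)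
            + Polynomial.C c).eval α = 0 ∧
          (Polynomial.C (B * (1 - γ)) * Polynomial.X ^ (m / d)
            - Polynomial.C (γ * D) * Polynomial.X ^ (n + m / d - m)
            - Polynomial.C (γ * c)).eval α = 0)) := by
  have key : ∀ α : K, α ^ (m / d) = 0 → D * α ^ (n + m / d - m) + c = 0 → False := by
    intro α h1 h2
    have h0 : α = 0 := eq_zero_of_pow_eq_zero h1
    subst h0
    by_cases hs : n + m / d - m = 0
    · rw [hs, pow_zero, mul_one] at h2
      exact hcD (by linear_combination h2)
    · rw [zero_pow hs, mul_zero, zero_add] at h2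
      exact hc0 h2
  have nz : ∀ γ : K, γ ^ d = 1 → γ ≠ 0 := by
    intro γ h h0
    rw [h0, zero_pow (by omega)] at h
    exact zero_ne_one h
  constructor
  · rintro γ₁ γ₂ g1 g2 n1 n2 hne α ⟨h1, h2⟩
    simp only [eval_sub, eval_mul, eval_C, eval_pow, eval_X] at h1 h2
    have hY : α ^ (m / d) = 0 := by
      have h3 : (B * (γ₂ - γ₁)) * α ^ (m / d) = 0 := by
        linear_combination γ₂ * h1 - γ₁ * h2
      exact (mul_eq_zero.mp h3).resolve_left (mul_ne_zero hB (sub_ne_zero.mpr hne.symm))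
    refine key α hY ?_
    have h4 : γ₁ * (D * α ^ (n + m / d - m) + c) = 0 := by
      linear_combination B * (1 - γ₁) * hY - h1
    exact (mul_eq_zero.mp h4).resolve_left (nz γ₁ g1)
  · rintro γ g n1 α ⟨h1, h2⟩
    simp only [eval_sub, eval_add, eval_mul, eval_C, eval_pow, eval_X] at h1 h2
    refine key α ?_ h1
    have h3 : (B * (1 - γ)) * α ^ (m / d) = 0 := by
      linear_combination h2 + γ * h1
    exact (mul_eq_zero.mp h3).resolve_left (mul_ne_zero hB (sub_ne_zero.mpr n1.symm))
end
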